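/- arXiv:2507.03606 — 2 statements merged into one kernel-verified Lean document; each statement's English description precedes it below -/
import Mathlib

section
/- Let F : (0,∞) → ℝ be nondecreasing with a point t₀ > 0 of discontinuity on the right, and set τ := F(t₀⁺) − F(t₀) > 0 where F(t₀⁺) := inf_{t > t₀} F(t). Let k = ⌊2t₀⌋ + 1 and let (γ_m)_{m≥1} satisfy 0 < γ_m < k − 2t₀ for all m ≥ 1. Define X = A ∪ B ⊆ ℝ with the usual metric, where A = {0} ∪ {t₀} ∪ {k·n : n ≥ 1} and B = {k·m + t₀ + γ_m : m ≥ 1}, and define T : X → X by Tx = 0 for x ∈ A and Tx = t₀ for x ∈ B. Then T is an F-contraction with constant τ, i.e., for all x, y ∈ X with d(Tx,Ty) > 0, τ + F(d(Tx,Ty)) ≤ F(d(x,y)). -/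
/-!
The map `T` takes only the values `0` and `t₀`, so `d(Tx, Ty) > 0` forces one of `x`, `y` to lie in
`A` and the other in `B`, and then `d(Tx, Ty) = t₀`. Since `τ + F(t₀) = F(t₀⁺)` is a lower bound of
`F` on `(t₀, ∞)`, it suffices that points of `A` and `B` are more than `t₀` apart. For the multiples
of `k` this holds because the offset `t₀ + γ m` of a point of `B` from `k * m` is more than `t₀`
away from both ends of the period `[0, k]`.
-/

open Set

/-- The contractive condition of an `F`-contraction with constant `τ`. Only the values of `F` on
`(0, ∞)` matter, and the sign of `τ` is left to the user of the definition. -/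
def IsFContraction {X : Type*} [PseudoMetricSpace X] (F : ℝ → ℝ) (τ : ℝ) (T : X → X) : Prop :=
  ∀ x y : X, 0 < dist (T x) (T y) → τ + F (dist (T x) (T y)) ≤ F (dist x y)

lemma sInf_image_Ioi_le_of_monotoneOn {α β : Type*} [Preorder α] [ConditionallyCompleteLattice β]
    {f : α → β} {a b : α} (hf : MonotoneOn f (Ici a)) (hab : a < b) :
    sInf (f '' Ioi a) ≤ f b := by
  have hbdd : BddBelow (f '' Ioi a) :=
    ⟨f a, forall_mem_image.2 fun _ hx => hf self_mem_Ici (le_of_lt hx) (le_of_lt hx)⟩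
  exact csInf_le hbdd (mem_image_of_mem f hab)

theorem isFContraction_of_two_values {E : Type*} [PseudoMetricSpace E] {F : ℝ → ℝ} {A B : Set E}
    {p q : E} {T : ↥(A ∪ B) → ↥(A ∪ B)} (hF : MonotoneOn F (Ici (dist p q)))
    (hTA : ∀ x : ↥(A ∪ B), (x : E) ∈ A → (T x : E) = p)
    (hTB : ∀ x : ↥(A ∪ B), (x : E) ∈ B → (T x : E) = q)
    (hsep : ∀ a ∈ A, ∀ b ∈ B, dist p q < dist a b) :
    IsFContraction F (sInf (F '' Ioi (dist p q)) - F (dist p q)) T := by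
  have across : ∀ x y : ↥(A ∪ B), (x : E) ∈ A → (y : E) ∈ B →
      sInf (F '' Ioi (dist p q)) - F (dist p q) + F (dist (T x) (T y)) ≤ F (dist x y) := by
    intro x y hx hy
    rw [Subtype.dist_eq (T x), hTA x hx, hTB y hy, sub_add_cancel]
    exact sInf_image_Ioi_le_of_monotoneOn hF (hsep x hx y hy)
  intro x y hpos
  rcases x.2 with hxA | hxB <;> rcases y.2 with hyA | hyB
  · simp [Subtype.dist_eq, hTA x hxA, hTA y hyA] at hpos
  · exact across x y hxA hyB
  · rw [dist_comm (T x), dist_comm x]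
    exact across y x hyA hxB
  · simp [Subtype.dist_eq, hTB x hxB, hTB y hyB] at hpos

lemma lt_abs_mul_intCast_sub_mul_intCast_add {R : Type*} [CommRing R] [LinearOrder R]
    [IsStrictOrderedRing R] {k s t : R} (hts : t < s) (hsk : s < k - t) (m n : ℤ) :
    t < |k * n - (k * m + s)| := by
  rcases lt_or_ge t 0 with ht | ht
  · exact ht.trans_le (abs_nonneg _)
  have hk : 0 ≤ k := by linarith
  rw [lt_abs]
  rcases le_or_gt n m with hnm | hmn
  · have hmul : k * n ≤ k * m := mul_le_mul_of_nonneg_left (Int.cast_le.2 hnm) hk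
    right; linarith
  · have hsucc : (m : R) + 1 ≤ n := mod_cast hmn
    have hmul : k * (m + 1) ≤ k * n := mul_le_mul_of_nonneg_left hsucc hk
    left; linarith

theorem stmt_3_general {F : ℝ → ℝ} {t₀ k : ℝ} {γ : ℕ → ℝ} {A B : Set ℝ}
    {T : ↥(A ∪ B) → ↥(A ∪ B)} (hF : MonotoneOn F (Ici t₀)) (ht₀ : 0 < t₀)
    (hγ : ∀ m : ℕ, 1 ≤ m → 0 < γ m ∧ γ m < k - 2 * t₀)
    (hA : A = {0, t₀} ∪ {x : ℝ | ∃ n : ℕ, 1 ≤ n ∧ x = k * n})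
    (hB : B = {x : ℝ | ∃ m : ℕ, 1 ≤ m ∧ x = k * m + t₀ + γ m})
    (hTA : ∀ x : ↥(A ∪ B), (x : ℝ) ∈ A → (T x : ℝ) = 0)
    (hTB : ∀ x : ↥(A ∪ B), (x : ℝ) ∈ B → (T x : ℝ) = t₀) :
    IsFContraction F (sInf (F '' Ioi t₀) - F t₀) T := by
  have hdist : dist 0 t₀ = t₀ := by rw [dist_zero_left, Real.norm_of_nonneg ht₀.le]
  have hsep : ∀ a ∈ A, ∀ b ∈ B, t₀ < dist a b := by
    intro a ha b hb
    obtain ⟨m, hm, rfl⟩ := hB.subset hb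
    obtain ⟨hγ_pos, hγ_lt⟩ := hγ m hm
    have hmultiple (n : ℤ) : t₀ < dist (k * n) (k * m + t₀ + γ m) := by
      rw [Real.dist_eq, add_assoc]
      exact_mod_cast lt_abs_mul_intCast_sub_mul_intCast_add (s := t₀ + γ m)
        (by linarith) (by linarith) m n
    rcases hA.subset ha with (rfl | rfl) | ⟨n, -, rfl⟩
    · simpa using hmultiple 0
    · have hkm : k ≤ k * m := le_mul_of_one_le_right (by linarith) (mod_cast hm)
      rw [Real.dist_eq, lt_abs]
      right; linarith
    · exact_mod_cast hmultiple n
  simpa only [hdist] using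
    isFContraction_of_two_values (hdist.symm ▸ hF) hTA hTB (hdist.symm ▸ hsep)

/-- With `F` nondecreasing on `(0,∞)` having a right discontinuity at
`t₀ > 0`, `τ := F(t₀⁺) − F(t₀)`, `k = ⌊2t₀⌋ + 1`, `0 < γ m < k − 2t₀`,
`X = A ∪ B ⊆ ℝ` with the usual metric where `A = {0} ∪ {t₀} ∪ {k·n : n ≥ 1}` and
`B = {k·m + t₀ + γ m : m ≥ 1}`, and `T : X → X` sending `A` to `0` and `B` to `t₀`,
the map `T` is an `F`-contraction with constant `τ`. -/
theorem stmt_3 (F : ℝ → ℝ) (hF : ∀ s t : ℝ, 0 < s → s ≤ t → F s ≤ F t)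
    (t₀ : ℝ) (ht₀ : 0 < t₀)
    (hdisc : F t₀ < sInf (F '' Set.Ioi t₀))
    (τ : ℝ) (hτ : τ = sInf (F '' Set.Ioi t₀) - F t₀)
    (k : ℝ) (hk : k = (⌊2 * t₀⌋ : ℝ) + 1)
    (γ : ℕ → ℝ) (hγ : ∀ m : ℕ, 1 ≤ m → 0 < γ m ∧ γ m < k - 2 * t₀)
    (A B : Set ℝ)
    (hA : A = {0, t₀} ∪ {x : ℝ | ∃ n : ℕ, 1 ≤ n ∧ x = k * n})
    (hB : B = {x : ℝ | ∃ m : ℕ, 1 ≤ m ∧ x = k * m + t₀ + γ m})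
    (T : ↥(A ∪ B) → ↥(A ∪ B))
    (hTA : ∀ x : ↥(A ∪ B), (x : ℝ) ∈ A → (T x : ℝ) = 0)
    (hTB : ∀ x : ↥(A ∪ B), (x : ℝ) ∈ B → (T x : ℝ) = t₀) :
    ∀ x y : ↥(A ∪ B), 0 < dist (T x) (T y) →
      τ + F (dist (T x) (T y)) ≤ F (dist x y) := by
  subst hτ
  exact stmt_3_general (fun s hs t _ hst => hF s t (ht₀.trans_le hs) hst) ht₀ hγ hA hB hTA hTB
end

section
/- Let F : (0,∞) → ℝ be nondecreasing and φ : (0,∞) → (0,∞) be such that for every t > 0 and every sequence (t_n) with t_n > t for all n and t_n → t, one has limsup_n φ(t_n) > F(t⁺) − F(t), where F(t⁺) := inf_{s > t} F(s). Let (X,d) be a complete metric space and let T : X → X be a (φ,F)-contraction. Then T is a Meir-Keeler contraction. -/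
/-!
If `φ r ≤ F r - F t` for values `r > t` arbitrarily close to `t`, then along a sequence of such `r`
tending to `t` the right-hand side converges to `F(t⁺) - F(t)`, which therefore bounds `limsup φ`,
contrary to the hypothesis. So `F r < φ r + F t` for all `r ≥ t` close to `t`; at `r = t` this is
the positivity of `φ`. If `d(x, y) = r` and `d(Tx, Ty) ≥ t`, then the contraction inequality and
the monotonicity of `F` give `φ r + F t ≤ F r`, so `d(Tx, Ty) < t` for all such `r`.
-/

section

open Set Filter Topology

theorem eventually_nhdsWithin_lt_of_forall_seq_lt_limsup {α β : Type*} [TopologicalSpace α]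
    [FirstCountableTopology α] [ConditionallyCompleteLinearOrder β] [TopologicalSpace β]
    [OrderTopology β] {s : Set α} {a : α} {f g : α → β} {L : β}
    (hf : IsBoundedUnder (· ≥ ·) (𝓝[s] a) f) (hg : Tendsto g (𝓝[s] a) (𝓝 L))
    (hlim : ∀ u : ℕ → α, (∀ n, u n ∈ s) → Tendsto u atTop (𝓝 a) →
      L < limsup (fun n => f (u n)) atTop) :
    ∀ᶠ x in 𝓝[s] a, g x < f x := by
  by_contra h
  have hfreq : ∃ᶠ x in 𝓝[s] a, f x ≤ g x ∧ x ∈ s :=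
    ((not_eventually.1 h).mono fun _ => not_lt.1).and_eventually self_mem_nhdsWithin
  obtain ⟨u, hu, hfg⟩ := exists_seq_forall_of_frequently hfreq
  have hgu : Tendsto (fun n => g (u n)) atTop (𝓝 L) := hg.comp hu
  have hfu : IsBoundedUnder (· ≥ ·) atTop fun n => f (u n) :=
    hu.isBoundedUnder_comp hf
  have hle : limsup (fun n => f (u n)) atTop ≤ limsup (fun n => g (u n)) atTop :=
    limsup_le_limsup (.of_forall fun n => (hfg n).1)
      hfu.isCoboundedUnder_le hgu.isBoundedUnder_le
  rw [hgu.limsup_eq] at hle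
  exact hle.not_gt (hlim u (fun n => (hfg n).2) (tendsto_nhds_of_tendsto_nhdsWithin hu))

theorem eventually_nhdsGE_lt_add_of_forall_seq_lt_limsup {F φ : ℝ → ℝ} {t : ℝ}
    (hF : MonotoneOn F (Ici t)) (hφ : ∀ r, t ≤ r → 0 < φ r)
    (hlim : ∀ u : ℕ → ℝ, (∀ n, t < u n) → Tendsto u atTop (𝓝 t) →
      sInf (F '' Ioi t) - F t < limsup (fun n => φ (u n)) atTop) :
    ∀ᶠ r in 𝓝[≥] t, F r < φ r + F t := by
  have hbdd : BddBelow (F '' Ioi t) :=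
    ⟨F t, forall_mem_image.2 fun _ hr => hF self_mem_Ici (Ioi_subset_Ici_self hr) (le_of_lt hr)⟩
  have hjump : Tendsto (fun r => F r - F t) (𝓝[>] t) (𝓝 (sInf (F '' Ioi t) - F t)) :=
    ((hF.mono Ioi_subset_Ici_self).tendsto_nhdsGT hbdd).sub_const _
  have hφbdd : IsBoundedUnder (· ≥ ·) (𝓝[>] t) φ :=
    isBoundedUnder_of_eventually_ge <|
      eventually_mem_nhdsWithin.mono fun r hr => (hφ r (le_of_lt hr)).le
  have hright : ∀ᶠ r in 𝓝[>] t, F r - F t < φ r :=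
    eventually_nhdsWithin_lt_of_forall_seq_lt_limsup hφbdd hjump hlim
  rw [← Ioi_insert, nhdsWithin_insert, eventually_sup, eventually_pure]
  exact ⟨lt_add_of_pos_left _ (hφ t le_rfl), hright.mono fun _ => sub_lt_iff_lt_add.1⟩

variable {X Y : Type*} [PseudoMetricSpace X] [PseudoMetricSpace Y] {F φ : ℝ → ℝ} {T : X → Y}

/-- `T` is a `(φ, F)`-contraction, with the domain and the codomain allowed to differ. For a
self-map of a metric space the two positivity conditions amount to `T x ≠ T y`; for pseudometrics
they keep the arguments of `φ` and `F` in `(0, ∞)`. -/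
def IsPhiFContraction (φ F : ℝ → ℝ) (T : X → Y) : Prop :=
  ∀ x y, 0 < dist x y → 0 < dist (T x) (T y) →
    φ (dist x y) + F (dist (T x) (T y)) ≤ F (dist x y)

/-- `T` is a Meir-Keeler contraction, with the domain and the codomain allowed to differ. -/
def IsMeirKeelerContraction (T : X → Y) : Prop :=
  ∀ ε : ℝ, 0 < ε → ∃ δ : ℝ, 0 < δ ∧ ∀ x y : X,
    ε ≤ dist x y → dist x y < ε + δ → dist (T x) (T y) < ε

theorem isMeirKeelerContraction_of_eventually_nhdsGE
    (h : ∀ ε, 0 < ε → ∀ᶠ r in 𝓝[≥] ε, ∀ x y, dist x y = r → dist (T x) (T y) < ε) :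
    IsMeirKeelerContraction T := by
  intro ε hε
  obtain ⟨b, hεb, hb⟩ := mem_nhdsGE_iff_exists_Ico_subset.1 (h ε hε)
  refine ⟨b - ε, sub_pos.2 hεb, fun x y hle hlt => hb ⟨hle, ?_⟩ x y rfl⟩
  rwa [add_sub_cancel] at hlt

theorem IsPhiFContraction.dist_map_lt (hT : IsPhiFContraction φ F T) {ε : ℝ} (hε : 0 < ε)
    (hF : MonotoneOn F (Ici ε)) {x y : X} (hxy : 0 < dist x y)
    (hlt : F (dist x y) < φ (dist x y) + F ε) : dist (T x) (T y) < ε := by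
  by_contra! hle
  have hFle : F ε ≤ F (dist (T x) (T y)) := hF self_mem_Ici hle hle
  linarith [hT x y hxy (hε.trans_le hle)]

theorem stmt_6_general (hF : MonotoneOn F (Ioi 0)) (hφ : ∀ t, 0 < t → 0 < φ t)
    (hlim : ∀ t, 0 < t → ∀ u : ℕ → ℝ, (∀ n, t < u n) → Tendsto u atTop (𝓝 t) →
      sInf (F '' Ioi t) - F t < limsup (fun n => φ (u n)) atTop)
    (hT : IsPhiFContraction φ F T) : IsMeirKeelerContraction T := by
  refine isMeirKeelerContraction_of_eventually_nhdsGE fun ε hε => ?_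
  have hFε : MonotoneOn F (Ici ε) := hF.mono (Ici_subset_Ioi.2 hε)
  have hlt : ∀ᶠ r in 𝓝[≥] ε, F r < φ r + F ε :=
    eventually_nhdsGE_lt_add_of_forall_seq_lt_limsup hFε (fun r hr => hφ r (hε.trans_le hr))
      (hlim ε hε)
  filter_upwards [hlt, self_mem_nhdsWithin] with _ hr hεr x y rfl
  exact hT.dist_map_lt hε hFε (hε.trans_le hεr) hr

end

open Filter in
/-- Let `F : (0,∞) → ℝ` be nondecreasing and `φ : (0,∞) → (0,∞)` be such
that for every `t > 0` and every sequence `tₙ → t` with `tₙ > t`, one has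
`limsup φ(tₙ) > F(t⁺) − F(t)` where `F(t⁺) = inf_{s > t} F s`. Then every
`(φ,F)`-contraction on a complete metric space is a Meir-Keeler contraction. -/
theorem stmt_6 (F φ : ℝ → ℝ) (hF : ∀ s t : ℝ, 0 < s → s ≤ t → F s ≤ F t)
    (hφpos : ∀ t : ℝ, 0 < t → 0 < φ t)
    (hlim : ∀ t : ℝ, 0 < t → ∀ u : ℕ → ℝ, (∀ n, t < u n) →
      Tendsto u atTop (nhds t) →
      sInf (F '' Set.Ioi t) - F t < limsup (fun n => φ (u n)) atTop)
    {X : Type*} [MetricSpace X] [CompleteSpace X] (T : X → X)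
    (hT : ∀ x y : X, T x ≠ T y →
      φ (dist x y) + F (dist (T x) (T y)) ≤ F (dist x y)) :
    ∀ ε : ℝ, 0 < ε → ∃ δ : ℝ, 0 < δ ∧ ∀ x y : X,
      ε ≤ dist x y → dist x y < ε + δ → dist (T x) (T y) < ε :=
  stmt_6_general (fun s hs t _ hst => hF s t hs hst) hφpos hlim
    fun x y _ hxy => hT x y (dist_pos.1 hxy)
end
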